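/- Let t and k be positive integers with t ≥ 7 and 2 ≤ k ≤ ⌊t/2⌋ − 1, and let N = (2^k − 1)·2^{t+1−k}. Then there exists a connected simple graph G on N vertices with exactly (k+1)·N − (2t − k + 4)·2^{k−1} + t − k + 2 edges such that every vertex u of G has broadcast time b(u) ≤ t + 1. -/

import Mathlib

/-- A broadcast protocol from originator `u` completing in `b` time units:
a nondecreasing sequence of informed sets `I 0 = {u}`, `I b = univ`, where at each
step every newly informed vertex is called by a distinct previously informed neighbor. -/
def IsBroadcastProtocol {V : Type*} (G : SimpleGraph V) (u : V) (b : ℕ) : Prop :=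
  ∃ I : ℕ → Set V,
    I 0 = {u} ∧
    (∀ i, I i ⊆ I (i + 1)) ∧
    I b = Set.univ ∧
    ∀ i, ∃ f : (I (i + 1) \ I i : Set V) → (I i : Set V),
      Function.Injective f ∧ ∀ v, G.Adj (f v) v

/-- The broadcast time `b(u)`: the minimum number of time units needed to broadcast
from `u` to all vertices. -/
noncomputable def broadcastTime {V : Type*} (G : SimpleGraph V) (u : V) : ℕ :=
  sInf {b | IsBroadcastProtocol G u b}

/-- The broadcast function `B(n)`: the minimum number of edges of a broadcast graph on
`n` vertices, i.e. a connected graph in which every vertex can broadcast within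
`⌈log₂ n⌉` time units. -/
noncomputable def broadcastFunction (n : ℕ) : ℕ :=
  sInf {m | ∃ G : SimpleGraph (Fin n), G.Connected ∧ G.edgeSet.ncard = m ∧
    ∀ u, broadcastTime G u ≤ Nat.clog 2 n}

/-- A broadcast certificate: call times and callers. -/
def BCert {V : Type*} (G : SimpleGraph V) (u : V) (b : ℕ) : Prop :=
  ∃ (τ : V → ℕ) (π : V → V), τ u = 0 ∧ ∀ v, τ v ≤ b ∧ (v ≠ u →
    G.Adj (π v) v ∧ τ (π v) < τ v ∧ ∀ w, w ≠ u → τ v = τ w → π v = π w → v = w)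

theorem BCert.protocol {V : Type*} {G : SimpleGraph V} {u : V} {b : ℕ} (h : BCert G u b) :
    IsBroadcastProtocol G u b := by
  obtain ⟨τ, π, h0, h⟩ := h
  refine ⟨fun i => {v | τ v ≤ i}, ?_, ?_, ?_, ?_⟩
  · ext v
    simp only [Set.mem_ofPred_eq, Set.mem_singleton_iff]
    constructor
    · intro hv
      by_contra hne
      have := ((h v).2 hne).2.1
      omega
    · rintro rfl
      omega
  · intro i v hv
    simp only [Set.mem_ofPred_eq] at *
    omega
  · ext v
    simpa using (h v).1
  · intro i
    have key : ∀ v : ({v | τ v ≤ i + 1} \ {v | τ v ≤ i} : Set V),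
        τ v.1 = i + 1 ∧ v.1 ≠ u := by
      rintro ⟨v, hv⟩
      simp only [Set.mem_sdiff, Set.mem_ofPred_eq] at hv
      refine ⟨by simp only; omega, ?_⟩
      intro hh
      simp only at hh
      rw [hh, h0] at hv
      omega
    refine ⟨fun v => ⟨π v.1, ?_⟩, ?_, ?_⟩
    · have h1 := key v
      have := ((h v.1).2 h1.2).2.1
      simp only [Set.mem_ofPred_eq]
      omega
    · intro v w hvw
      have h1 := key v
      have h2 := key w
      apply Subtype.ext
      exact ((h v.1).2 h1.2).2.2 w.1 h2.2 (by omega) (congrArg Subtype.val hvw)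
    · intro v
      exact ((h v.1).2 (key v).2).1

theorem BCert.reachable {V : Type*} {G : SimpleGraph V} {u : V} {b : ℕ} (h : BCert G u b) (v : V) :
    G.Reachable u v := by
  obtain ⟨τ, π, h0, h⟩ := h
  induction hn : τ v using Nat.strong_induction_on generalizing v with
  | _ n ih =>
    by_cases hv : v = u
    · rw [hv]
    · have := (h v).2 hv
      exact (ih _ (hn ▸ this.2.1) (π v) rfl).trans this.1.reachable

theorem BCert.mono {V : Type*} {G H : SimpleGraph V} (hGH : G ≤ H) {u : V} {b : ℕ}
    (h : BCert G u b) : BCert H u b := by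
  obtain ⟨τ, π, h0, h⟩ := h
  exact ⟨τ, π, h0, fun v => ⟨(h v).1, fun hv => ⟨hGH ((h v).2 hv).1, ((h v).2 hv).2⟩⟩⟩

theorem BCert.transport {V W : Type*} {G : SimpleGraph V} (e : W ≃ V) {u : W} {b : ℕ}
    (h : BCert G (e u) b) : BCert (G.comap e) u b := by
  obtain ⟨τ, π, h0, h⟩ := h
  refine ⟨fun w => τ (e w), fun w => e.symm (π (e w)), h0, fun v => ⟨(h _).1, fun hv => ?_⟩⟩
  have := (h (e v)).2 (by simpa using hv)
  refine ⟨by simpa using this.1, by simpa using this.2.1, fun w hw h1 h2 => ?_⟩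
  exact e.injective (this.2.2 (e w) (by simpa using hw) h1 (by simpa using h2))

/-- Reduction: enough to have a graph with at most `M` edges on a type with `N` elements. -/
theorem padding {V : Type} [Fintype V] (N M b : ℕ) (hN : Fintype.card V = N) (hpos : 0 < N)
    (G : SimpleGraph V) (hM : G.edgeSet.ncard ≤ M) (hM' : M ≤ N.choose 2)
    (hb : ∀ u, BCert G u b) :
    ∃ G : SimpleGraph (Fin N), G.Connected ∧ G.edgeSet.ncard = M ∧
      ∀ u, broadcastTime G u ≤ b := by
  classical
  let e : Fin N ≃ V := (Fintype.equivFinOfCardEq hN).symm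
  have hE : (G.comap e).edgeSet.ncard = G.edgeSet.ncard :=
    Nat.card_congr (SimpleGraph.Iso.comap e G).mapEdgeSet
  have h1 : (G.comap e).edgeFinset ⊆ (⊤ : SimpleGraph (Fin N)).edgeFinset :=
    SimpleGraph.edgeFinset_mono le_top
  obtain ⟨S, hS1, hS2, hS3⟩ := Finset.exists_subsuperset_card_eq (n := M) h1
    (by rw [← Set.ncard_coe_finset, SimpleGraph.coe_edgeFinset, hE]; exact hM)
    (by rw [SimpleGraph.card_edgeFinset_top_eq_card_choose_two, Fintype.card_fin]; exact hM')
  have hle : G.comap e ≤ SimpleGraph.fromEdgeSet (S : Set (Sym2 (Fin N))) := by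
    intro a b hab
    rw [SimpleGraph.fromEdgeSet_adj]
    exact ⟨hS1 (by simpa using hab), hab.ne⟩
  have hc : ∀ u, BCert (SimpleGraph.fromEdgeSet (S : Set (Sym2 (Fin N)))) u b :=
    fun u => (BCert.transport e (hb (e u))).mono hle
  refine ⟨SimpleGraph.fromEdgeSet (S : Set (Sym2 (Fin N))), ?_, ?_, fun u => ?_⟩
  · have : Nonempty (Fin N) := ⟨⟨0, hpos⟩⟩
    exact ⟨fun x y => (hc x).reachable y⟩
  · rw [SimpleGraph.edgeSet_fromEdgeSet, sdiff_eq_left.mpr, Set.ncard_coe_finset, hS3]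
    rw [Set.disjoint_left]
    intro s hs hd
    have := hS2 hs
    rw [SimpleGraph.mem_edgeFinset] at this
    exact SimpleGraph.not_isDiag_of_mem_edgeSet _ this (by simpa using hd)
  · exact Nat.sInf_le (hc u).protocol

theorem ncard_edges_le {V : Type*} [Fintype V] [DecidableEq V] (out : V → Finset V) :
    (SimpleGraph.fromRel (fun a b => b ∈ out a)).edgeSet.ncard ≤ ∑ v, (out v).card := by
  classical
  have : (SimpleGraph.fromRel (fun a b => b ∈ out a)).edgeSet ⊆
      (((Finset.univ.sigma out).image (fun p => s(p.1, p.2)) : Finset (Sym2 V)) : Set (Sym2 V)) := by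
    intro s
    induction s using Sym2.ind with
    | _ a b =>
      intro h
      simp only [SimpleGraph.mem_edgeSet, SimpleGraph.fromRel_adj] at h
      simp only [Finset.coe_image, Set.mem_image, Finset.mem_coe, Finset.mem_sigma,
        Finset.mem_univ, true_and]
      rcases h.2 with h | h
      · exact ⟨⟨a, b⟩, h, rfl⟩
      · exact ⟨⟨b, a⟩, h, Sym2.eq_swap⟩
  calc _ ≤ _ := Set.ncard_le_ncard this (Finset.finite_toSet _)
    _ ≤ _ := by
      rw [Set.ncard_coe_finset]
      exact Finset.card_image_le.trans (by rw [Finset.card_sigma])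

/-- Nonempty subsets of `Fin k`: nonzero hypercube positions. -/
abbrev BP (k : ℕ) : Type := {p : Finset (Fin k) // p.Nonempty}

/-- Vertices: hypercube position and binomial tree vertex. -/
abbrev BV (k m : ℕ) : Type := BP k × Finset (Fin m)

/-- The unit position. -/
def bsing {k : ℕ} (i : Fin k) : BP k := ⟨{i}, Finset.singleton_nonempty i⟩

/-- Oriented adjacency. -/
def bout {k m : ℕ} (v : BV k m) : Finset (BV k m) :=
  if hx : v.2.Nonempty then
    insert (v.1, v.2.erase (v.2.max' hx))
      ((Finset.univ.filter (fun i => ¬(v.2.card = 1 ∧ i = v.1.1.min' v.1.2))).image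
        (fun i => (bsing i, ∅)))
  else Finset.univ.filter (fun w => w.2 = ∅ ∧ ∃ i ∈ v.1.1, w.1.1 = v.1.1.erase i)

/-- The graph. -/
def bgraph (k m : ℕ) : SimpleGraph (BV k m) := SimpleGraph.fromRel (fun a b => b ∈ bout a)

theorem badj_tree {k m : ℕ} (p : BP k) (x : Finset (Fin m)) (hx : x.Nonempty) :
    (bgraph k m).Adj (p, x.erase (x.max' hx)) (p, x) := by
  rw [bgraph, SimpleGraph.fromRel_adj]
  refine ⟨?_, Or.inr ?_⟩
  · intro h
    have := (Prod.ext_iff.1 h).2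
    exact Finset.erase_ne_self.2 (x.max'_mem hx) this
  · simp [bout, hx]

theorem badj_cube {k m : ℕ} (p q : BP k) (i : Fin k) (h : q.1 = symmDiff p.1 {i}) :
    (bgraph k m).Adj (q, ∅) (p, ∅) := by
  rw [bgraph, SimpleGraph.fromRel_adj]
  have hne : q ≠ p := by
    rintro rfl
    have := symmDiff_eq_left.1 h.symm
    simp at this
  refine ⟨fun hh => hne (Prod.ext_iff.1 hh).1, ?_⟩
  by_cases hi : i ∈ p.1
  · right
    simp only [bout, Finset.not_nonempty_empty, dite_false, Finset.mem_filter, Finset.mem_univ,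
      true_and]
    refine ⟨i, hi, ?_⟩
    rw [h]
    ext a
    simp only [Finset.mem_symmDiff, Finset.mem_singleton, Finset.mem_erase]
    grind
  · left
    simp only [bout, Finset.not_nonempty_empty, dite_false, Finset.mem_filter, Finset.mem_univ,
      true_and]
    refine ⟨i, ?_, ?_⟩
    · rw [h]
      simp [Finset.mem_symmDiff, hi]
    · rw [h]
      ext a
      simp only [Finset.mem_symmDiff, Finset.mem_singleton, Finset.mem_erase]
      grind

theorem badj_sing {k m : ℕ} (p : BP k) (x : Finset (Fin m)) (hx : x.Nonempty) (i : Fin k)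
    (h : ¬(x.card = 1 ∧ i = p.1.min' p.2)) : (bgraph k m).Adj (p, x) (bsing i, ∅) := by
  rw [bgraph, SimpleGraph.fromRel_adj]
  refine ⟨fun hh => hx.ne_empty (Prod.ext_iff.1 hh).2, Or.inl ?_⟩
  simp only [bout, hx, dite_true]
  refine Finset.mem_insert_of_mem (Finset.mem_image.2 ⟨i, ?_, rfl⟩)
  simpa using h

theorem badj_parent {k m : ℕ} (p : BP k) (x : Finset (Fin m)) (hx : x.card = 1) :
    (bgraph k m).Adj (p, x) (p, ∅) := by
  obtain ⟨a, rfl⟩ := Finset.card_eq_one.1 hx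
  have := badj_tree p {a} (Finset.singleton_nonempty a)
  simpa using this.symm

/-- Extension of a broadcast of the roots to the trees. -/
theorem bextend {k m : ℕ} (u : BV k m) (τ : BP k → ℕ) (π : BP k → BV k m)
    (hτ : ∀ p, τ p ≤ k)
    (h : ∀ p, (p, ∅) ≠ u → (bgraph k m).Adj (π p) (p, ∅) ∧
      ((π p = u ∧ 0 < τ p) ∨ ∃ q, π p = (q, ∅) ∧ τ q < τ p))
    (hinj : ∀ p q, (p, ∅) ≠ u → (q, ∅) ≠ u → τ p = τ q → π p = π q → p = q) :
    BCert (bgraph k m) u (k + m) := by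
  classical
  let T : BV k m → ℕ := fun v => if v = u then 0 else
    if hx : v.2.Nonempty then k + 1 + (v.2.max' hx).val else τ v.1
  let P : BV k m → BV k m := fun v =>
    if hx : v.2.Nonempty then (v.1, v.2.erase (v.2.max' hx)) else π v.1
  have T0 : ∀ p, (p, ∅) ≠ u → T (p, ∅) = τ p := by
    intro p hp
    simp [T, hp]
  have T1 : ∀ p x (hx : x.Nonempty), (p, x) ≠ u → T (p, x) = k + 1 + (x.max' hx).val := by
    intro p x hx hp
    simp [T, hp, hx]
  have P0 : ∀ p, P (p, ∅) = π p := by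
    intro p
    simp [P]
  have P1 : ∀ p x (hx : x.Nonempty), P (p, x) = (p, x.erase (x.max' hx)) := by
    intro p x hx
    simp [P, hx]
  have Tu : T u = 0 := by simp [T]
  refine ⟨T, P, Tu, ?_⟩
  rintro ⟨p, x⟩
  rcases x.eq_empty_or_nonempty with rfl | hx
  · refine ⟨?_, fun hv => ?_⟩
    · by_cases hv : (p, (∅ : Finset (Fin m))) = u
      · rw [hv, Tu]; omega
      · rw [T0 p hv]
        have := hτ p
        omega
    · rw [T0 p hv, P0 p]
      refine ⟨(h p hv).1, ?_, ?_⟩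
      · rcases (h p hv).2 with ⟨h1, h2⟩ | ⟨q, h1, h2⟩
        · rw [h1, Tu]; exact h2
        · rw [h1]
          by_cases hq : (q, (∅ : Finset (Fin m))) = u
          · rw [hq, Tu]; omega
          · rw [T0 q hq]; exact h2
      · rintro ⟨q, y⟩ hw h1 h2
        rcases y.eq_empty_or_nonempty with rfl | hy
        · rw [T0 q hw] at h1
          rw [P0 q] at h2
          rw [hinj p q hv hw h1 h2]
        · rw [T1 q y hy hw] at h1
          have := hτ p
          omega
  · refine ⟨?_, fun hv => ?_⟩
    · by_cases hv : (p, x) = u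
      · rw [hv, Tu]; omega
      · rw [T1 p x hx hv]
        have := (x.max' hx).isLt
        omega
    · rw [T1 p x hx hv, P1 p x hx]
      refine ⟨badj_tree p x hx, ?_, ?_⟩
      · by_cases hq : (p, x.erase (x.max' hx)) = u
        · rw [hq, Tu]; omega
        · rcases (x.erase (x.max' hx)).eq_empty_or_nonempty with he | he
          · rw [he] at hq ⊢
            rw [T0 p hq]
            have := hτ p
            omega
          · rw [T1 p _ he hq]
            have := Finset.max'_mem _ he
            have h3 := Finset.lt_max'_of_mem_erase_max' x hx this
            have h4 : ((x.erase (x.max' hx)).max' he).val < (x.max' hx).val := h3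
            omega
      · rintro ⟨q, y⟩ hw h1 h2
        rcases y.eq_empty_or_nonempty with rfl | hy
        · rw [T0 q hw] at h1
          have := hτ q
          omega
        · rw [T1 q y hy hw] at h1
          rw [P1 q y hy] at h2
          have h3 : x.max' hx = y.max' hy := Fin.ext (by omega)
          obtain ⟨h4, h5⟩ := Prod.ext_iff.1 h2
          simp only at h4 h5
          have h6 : x = y := by
            rw [← Finset.insert_erase (x.max'_mem hx), ← Finset.insert_erase (y.max'_mem hy), h5, h3]
          rw [h4, h6]

/-- Rank function sending `j` to the prescribed position `z`. -/
theorem exists_rank {k : ℕ} (j z : Fin k) : ∃ ρ : Fin k → ℕ, Function.Injective ρ ∧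
    (∀ i, ρ i < k) ∧ ρ j = z.val :=
  ⟨fun i => (Equiv.swap z j i).val, fun a b h => (Equiv.swap z j).injective (Fin.ext h),
    fun i => Fin.isLt _, by simp⟩

theorem exists_last {k : ℕ} (ρ : Fin k → ℕ) : ∃ lb : Finset (Fin k) → Option (Fin k),
    ∀ D, (lb D = none ∧ D = ∅) ∨ ∃ l, lb D = some l ∧ l ∈ D ∧ ∀ e ∈ D, ρ e ≤ ρ l := by
  have : ∀ (D : Finset (Fin k)), ∃ o : Option (Fin k),
      (o = none ∧ D = ∅) ∨ ∃ l, o = some l ∧ l ∈ D ∧ ∀ e ∈ D, ρ e ≤ ρ l := by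
    intro D
    rcases D.eq_empty_or_nonempty with h | h
    · exact ⟨none, Or.inl ⟨rfl, h⟩⟩
    · obtain ⟨l, h1, h2⟩ := D.exists_max_image ρ h
      exact ⟨some l, Or.inr ⟨l, rfl, h1, h2⟩⟩
  choose f hf using this
  exact ⟨f, hf⟩

/-- Flip a coordinate (identity if the result would be zero). -/
def bflip {k : ℕ} (x : BP k) (l : Fin k) : BP k :=
  if h : (symmDiff x.1 {l}).Nonempty then ⟨symmDiff x.1 {l}, h⟩ else x

theorem bflip_val {k : ℕ} (x : BP k) (l j : Fin k) (h : j ∈ symmDiff x.1 {l}) :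
    (bflip x l).1 = symmDiff x.1 {l} := by
  have : (symmDiff x.1 {l}).Nonempty := ⟨j, h⟩
  simp [bflip, this]

theorem bcert_root {k m : ℕ} (p0 : BP k) : BCert (bgraph k m) (p0, ∅) (k + m) := by
  classical
  obtain ⟨j, hj⟩ := p0.2
  have hk : 0 < k := j.pos
  obtain ⟨ρ, hρi, hρk, hρj⟩ := exists_rank j ⟨k - 1, by omega⟩
  simp only at hρj
  obtain ⟨lb, hlb⟩ := exists_last ρ
  let D : BP k → Finset (Fin k) := fun x => symmDiff x.1 p0.1
  let τ : BP k → ℕ := fun x => (lb (D x)).elim 0 (fun l => ρ l + 1)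
  let π : BP k → BV k m := fun x => (lb (D x)).elim (p0, ∅) (fun l => (bflip x l, ∅))
  have key : ∀ x, x = p0 ∨ ∃ l, l ∈ D x ∧ (∀ e ∈ D x, ρ e ≤ ρ l) ∧ τ x = ρ l + 1 ∧
      π x = (bflip x l, ∅) ∧ (bflip x l).1 = symmDiff x.1 {l} := by
    intro x
    rcases hlb (D x) with ⟨h1, h2⟩ | ⟨l, h1, h2, h3⟩
    · left
      exact Subtype.ext (symmDiff_eq_bot.1 h2)
    · right
      refine ⟨l, h2, h3, by simp [τ, h1], by simp [π, h1], bflip_val x l j ?_⟩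
      by_cases hlj : l = j
      · subst hlj
        simp only [D, Finset.mem_symmDiff] at h2
        simp only [Finset.mem_symmDiff, Finset.mem_singleton]
        tauto
      · have hjD : j ∉ D x := by
          intro h4
          have h5 := h3 j h4
          have h6 := hρk l
          exact hlj (hρi (by omega))
        simp only [D, Finset.mem_symmDiff] at hjD
        simp only [Finset.mem_symmDiff, Finset.mem_singleton]
        have : ¬ j = l := fun h => hlj h.symm
        tauto
  refine bextend (p0, ∅) τ π ?_ ?_ ?_
  · intro x
    simp only [τ]
    cases lb (D x) with
    | none => simp
    | some l => exact hρk l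
  · intro x hx
    rcases key x with rfl | ⟨l, hl, hmax, h1, h2, h3⟩
    · exact absurd rfl hx
    · refine ⟨h2 ▸ badj_cube _ _ l h3, Or.inr ⟨_, h2, ?_⟩⟩
      rw [h1]
      rcases hlb (D (bflip x l)) with ⟨h4, h5⟩ | ⟨l', h4, h5, h6⟩
      · simp [τ, h4]
      · have h7 : τ (bflip x l) = ρ l' + 1 := by simp [τ, h4]
        rw [h7]
        have h8 : l' ∈ D x ∧ l' ≠ l := by
          simp only [D, h3, Finset.mem_symmDiff, Finset.mem_singleton] at h5 hl ⊢
          grind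
        have h9 := hmax l' h8.1
        have : ρ l' ≠ ρ l := fun h => h8.2 (hρi h)
        omega
  · intro x y hx hy h1 h2
    rcases key x with rfl | ⟨l, hl, hmax, h3, h4, h5⟩
    · exact absurd rfl hx
    rcases key y with rfl | ⟨l', hl', hmax', h3', h4', h5'⟩
    · exact absurd rfl hy
    have hll : l = l' := hρi (by omega)
    subst hll
    rw [h4, h4'] at h2
    have h6 : symmDiff x.1 {l} = symmDiff y.1 {l} := by
      rw [← h5, ← h5']
      exact congrArg Subtype.val (Prod.ext_iff.1 h2).1
    exact Subtype.ext (symmDiff_left_injective _ h6)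

theorem bcert_gen {k m : ℕ} (u : BV k m) (hu : u.2.Nonempty) (ρ : Fin k → ℕ)
    (hρi : Function.Injective ρ) (hρk : ∀ i, ρ i < k) (b : Fin k → BP k)
    (hb1 : ∀ s, s ∈ (b s).1) (hb2 : ∀ s, ∀ e ∈ (b s).1, ρ s ≤ ρ e)
    (hadj : ∀ s, (bgraph k m).Adj u (b s, ∅)) : BCert (bgraph k m) u (k + m) := by
  classical
  obtain ⟨lb, hlb⟩ := exists_last ρ
  have hfb : ∀ x : BP k, ∃ s, s ∈ x.1 ∧ ∀ e ∈ x.1, ρ s ≤ ρ e :=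
    fun x => x.1.exists_min_image ρ x.2
  choose fb fb1 fb2 using hfb
  let D : BP k → Finset (Fin k) := fun x => symmDiff x.1 (b (fb x)).1
  let τ : BP k → ℕ := fun x => (lb (D x)).elim (ρ (fb x) + 1) (fun l => ρ l + 1)
  let π : BP k → BV k m := fun x => (lb (D x)).elim u (fun l => (bflip x l, ∅))
  have hD : ∀ x, ∀ e ∈ D x, ρ (fb x) < ρ e := by
    intro x e he
    have h1 : e ≠ fb x := by
      rintro rfl
      have := fb1 x
      have := hb1 (fb x)
      simp only [D, Finset.mem_symmDiff] at he
      tauto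
    have h2 : ρ (fb x) ≤ ρ e := by
      simp only [D, Finset.mem_symmDiff] at he
      rcases he with he | he
      · exact fb2 x e he.1
      · exact hb2 _ e he.1
    exact lt_of_le_of_ne h2 (fun h => h1 (hρi h).symm)
  have key : ∀ x, (x = b (fb x) ∧ τ x = ρ (fb x) + 1 ∧ π x = u) ∨
      ∃ l, l ∈ D x ∧ (∀ e ∈ D x, ρ e ≤ ρ l) ∧ τ x = ρ l + 1 ∧
      π x = (bflip x l, ∅) ∧ (bflip x l).1 = symmDiff x.1 {l} ∧ fb (bflip x l) = fb x := by
    intro x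
    rcases hlb (D x) with ⟨h1, h2⟩ | ⟨l, h1, h2, h3⟩
    · left
      exact ⟨Subtype.ext (symmDiff_eq_bot.1 h2), by simp [τ, h1], by simp [π, h1]⟩
    · right
      have hl := hD x l h2
      have hm : fb x ∈ symmDiff x.1 {l} := by
        have h4 : fb x ≠ l := by
          intro h
          rw [h] at hl
          omega
        have := fb1 x
        simp only [Finset.mem_symmDiff, Finset.mem_singleton]
        tauto
      have hv := bflip_val x l (fb x) hm
      refine ⟨l, h2, h3, by simp [τ, h1], by simp [π, h1], hv, ?_⟩
      apply hρi
      apply le_antisymm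
      · exact fb2 (bflip x l) _ (hv ▸ hm)
      · have h5 := fb1 (bflip x l)
        rw [hv, Finset.mem_symmDiff, Finset.mem_singleton] at h5
        rcases h5 with h5 | h5
        · exact fb2 x _ h5.1
        · rw [h5.1]
          exact hl.le
  refine bextend u τ π ?_ ?_ ?_
  · intro x
    rcases key x with ⟨-, h, -⟩ | ⟨l, -, -, h, -⟩
    · rw [h]; exact hρk _
    · rw [h]; exact hρk _
  · intro x hx
    rcases key x with ⟨h1, h2, h3⟩ | ⟨l, hl, hmax, h1, h2, h3, hfb⟩
    · refine ⟨?_, Or.inl ⟨h3, by omega⟩⟩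
      rw [h3, h1]
      exact hadj _
    · refine ⟨h2 ▸ badj_cube _ _ l h3, Or.inr ⟨_, h2, ?_⟩⟩
      rw [h1]
      rcases key (bflip x l) with ⟨-, h4, -⟩ | ⟨l', h5, -, h7, -⟩
      · rw [h4, hfb]
        have := hD x l hl
        omega
      · rw [h7]
        have h8 : l' ∈ D x ∧ l' ≠ l := by
          simp only [D, h3, hfb, Finset.mem_symmDiff, Finset.mem_singleton] at h5 hl ⊢
          grind
        have h9 := hmax l' h8.1
        have : ρ l' ≠ ρ l := fun h => h8.2 (hρi h)
        omega
  · intro x y hx hy h1 h2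
    rcases key x with ⟨h3, h4, h5⟩ | ⟨l, hl, hmax, h3, h4, h5, -⟩
    · rcases key y with ⟨h3', h4', h5'⟩ | ⟨l', hl', hmax', h3', h4', h5', -⟩
      · have : fb x = fb y := hρi (by omega)
        rw [h3, h3', this]
      · rw [h5, h4'] at h2
        rw [h2] at hu
        simp at hu
    · rcases key y with ⟨h3', h4', h5'⟩ | ⟨l', hl', hmax', h3', h4', h5', -⟩
      · rw [h4, h5'] at h2
        rw [← h2] at hu
        simp at hu
      · have hll : l = l' := hρi (by omega)
        subst hll
        rw [h4, h4'] at h2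
        have h6 : symmDiff x.1 {l} = symmDiff y.1 {l} := by
          rw [← h5, ← h5']
          exact congrArg Subtype.val (Prod.ext_iff.1 h2).1
        exact Subtype.ext (symmDiff_left_injective _ h6)

theorem bcert_all {k m : ℕ} (u : BV k m) : BCert (bgraph k m) u (k + m) := by
  obtain ⟨p, x⟩ := u
  rcases x.eq_empty_or_nonempty with rfl | hx
  · exact bcert_root p
  have hk : 0 < k := (p.1.min' p.2).pos
  obtain ⟨ρ, hρi, hρk, hρj⟩ := exists_rank (p.1.min' p.2) ⟨0, hk⟩
  simp only at hρj
  by_cases h1 : x.card = 1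
  · refine bcert_gen (p, x) hx ρ hρi hρk (fun s => if s = p.1.min' p.2 then p else bsing s)
      ?_ ?_ ?_
    · intro s
      split_ifs with h
      · rw [h]; exact p.1.min'_mem p.2
      · simp [bsing]
    · intro s e he
      split_ifs at he with h
      · rw [h, hρj]; omega
      · simp only [bsing, Finset.mem_singleton] at he
        rw [he]
    · intro s
      split_ifs with h
      · exact badj_parent p x h1
      · exact badj_sing p x hx s (by tauto)
  · refine bcert_gen (p, x) hx ρ hρi hρk bsing ?_ ?_ ?_
    · intro s
      simp [bsing]
    · intro s e he
      simp only [bsing, Finset.mem_singleton] at he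
      rw [he]
    · intro s
      exact badj_sing p x hx s (by tauto)

theorem bout_root_card {k m : ℕ} (p : BP k) :
    (bout ((p, ∅) : BV k m)).card + (if p.1.card = 1 then 1 else 0) ≤ p.1.card := by
  classical
  simp only [bout, Finset.not_nonempty_empty, dite_false]
  split_ifs with h
  · rw [h]
    have : (Finset.univ.filter (fun w : BV k m => w.2 = ∅ ∧ ∃ i ∈ p.1, w.1.1 = p.1.erase i)) = ∅ := by
      rw [Finset.filter_eq_empty_iff]
      rintro ⟨q, y⟩ - ⟨-, i, hi, hq⟩
      have h2 := q.2
      simp only at hq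
      rw [hq, ← Finset.card_pos, Finset.card_erase_of_mem hi, h] at h2
      omega
    rw [this]
    simp
  · rw [add_zero]
    calc _ ≤ (p.1.image (fun i => p.1.erase i)).card := by
          refine Finset.card_le_card_of_injOn (fun w => w.1.1) ?_ ?_
          · rintro ⟨q, y⟩ hw
            simp only [Finset.coe_filter, Finset.mem_univ, true_and, Set.mem_ofPred_eq] at hw
            obtain ⟨-, i, hi, hq⟩ := hw
            simp only [Finset.coe_image, Set.mem_image, Finset.mem_coe]
            exact ⟨i, hi, hq.symm⟩
          · rintro ⟨q, y⟩ hw ⟨q', y'⟩ hw' hh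
            simp only [Finset.coe_filter, Finset.mem_univ, true_and, Set.mem_ofPred_eq] at hw hw'
            rw [Prod.ext_iff]
            exact ⟨Subtype.ext hh, hw.1.trans hw'.1.symm⟩
      _ ≤ _ := Finset.card_image_le

theorem bout_card {k m : ℕ} (p : BP k) (x : Finset (Fin m)) (hx : x.Nonempty) :
    (bout (p, x)).card + (if x.card = 1 then 1 else 0) ≤ k + 1 := by
  classical
  simp only [bout, hx, dite_true]
  have h1 := Finset.card_insert_le (p, x.erase (x.max' hx))
    ((Finset.univ.filter (fun i => ¬(x.card = 1 ∧ i = p.1.min' p.2))).image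
        (fun i => ((bsing i, ∅) : BV k m)))
  have h2 := Finset.card_image_le (s := Finset.univ.filter
    (fun i => ¬(x.card = 1 ∧ i = p.1.min' p.2))) (f := fun i => ((bsing i, ∅) : BV k m))
  have h3 : (Finset.univ.filter (fun i => ¬(x.card = 1 ∧ i = p.1.min' p.2))).card
      + (if x.card = 1 then 1 else 0) ≤ k := by
    split_ifs with h
    · have hk : 0 < k := (p.1.min' p.2).pos
      simp only [h, true_and]
      rw [Finset.filter_not, Finset.filter_eq', if_pos (Finset.mem_univ _),
        Finset.card_sdiff_of_subset (by simp)]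
      simp
      omega
    · simp [h]
  omega

theorem sum_card_finset (k : ℕ) : 2 * ∑ s : Finset (Fin k), s.card = k * 2 ^ k := by
  have h1 : ∑ s : Finset (Fin k), sᶜ.card = ∑ s : Finset (Fin k), s.card :=
    Equiv.sum_comp (Equiv.ofBijective _ (compl_bijective : Function.Bijective
      (compl : Finset (Fin k) → Finset (Fin k)))) (fun s => s.card)
  have h2 : ∑ s : Finset (Fin k), (s.card + sᶜ.card) = ∑ s : Finset (Fin k), k := by
    refine Finset.sum_congr rfl fun s _ => ?_
    rw [Finset.card_add_card_compl, Fintype.card_fin]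
  rw [Finset.sum_add_distrib, h1] at h2
  simp at h2
  rw [two_mul, h2, mul_comm]

theorem sum_single (k : ℕ) : ∑ s : Finset (Fin k), (if s.card = 1 then 1 else 0) = k := by
  rw [← Finset.card_filter]
  simp

theorem sum_split {k : ℕ} (f : Finset (Fin k) → ℕ) :
    ∑ s, f s = f ∅ + ∑ p : BP k, f p.1 := by
  classical
  rw [← Finset.add_sum_erase Finset.univ f (Finset.mem_univ ∅)]
  congr 1
  exact Finset.sum_subtype _ (fun x => by simp [Finset.nonempty_iff_ne_empty]) f

theorem sum_BP {k : ℕ} (f : Finset (Fin k) → ℕ) (hf : f ∅ = 0) :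
    ∑ p : BP k, f p.1 = ∑ s, f s := by
  rw [sum_split, hf, zero_add]

theorem card_BP (k : ℕ) : Fintype.card (BP k) = 2 ^ k - 1 := by
  have h := Fintype.card_subtype_compl (fun p : Finset (Fin k) => p = ∅)
  simp only [Fintype.card_finset, Fintype.card_fin, Fintype.card_subtype_eq] at h
  rw [← h]
  exact Fintype.card_congr (Equiv.subtypeEquivRight fun p => Finset.nonempty_iff_ne_empty)

theorem bsum {k m : ℕ} : 2 * (bgraph k m).edgeSet.ncard + 2 * ((2 ^ k - 1) * m) + 2 * k ≤
    k * 2 ^ k + 2 * ((2 ^ k - 1) * ((2 ^ m - 1) * (k + 1))) := by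
  classical
  have h0 := ncard_edges_le (bout : BV k m → Finset (BV k m))
  change (bgraph k m).edgeSet.ncard ≤ _ at h0
  rw [Fintype.sum_prod_type] at h0
  have h1 : ∀ p : BP k, ∑ x : Finset (Fin m), (bout (p, x)).card + m +
      (if p.1.card = 1 then 1 else 0) ≤ p.1.card + (2 ^ m - 1) * (k + 1) := by
    intro p
    have e1 : ∑ x : Finset (Fin m), (bout (p, x)).card = (bout ((p, ∅) : BV k m)).card +
        ∑ q : BP m, (bout (p, q.1)).card :=
      sum_split (fun x => (bout (p, x)).card)
    have e2 : ∑ q : BP m, (if q.1.card = 1 then 1 else 0) = m :=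
      (sum_BP (fun s => if s.card = 1 then 1 else 0) (by simp)).trans (sum_single m)
    have e3 : ∑ q : BP m, ((bout (p, q.1)).card + (if q.1.card = 1 then 1 else 0)) ≤
        ∑ q : BP m, (k + 1) := Finset.sum_le_sum fun q _ => bout_card p q.1 q.2
    rw [Finset.sum_add_distrib, e2, Finset.sum_const, Finset.card_univ, card_BP, smul_eq_mul] at e3
    have e4 := bout_root_card (m := m) p
    omega
  have h2 := Finset.sum_le_sum (fun p (_ : p ∈ (Finset.univ : Finset (BP k))) => h1 p)
  rw [Finset.sum_add_distrib, Finset.sum_add_distrib, Finset.sum_add_distrib, Finset.sum_const,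
    Finset.sum_const, Finset.card_univ, card_BP, smul_eq_mul, smul_eq_mul,
    sum_BP (fun s => s.card) (by simp), sum_BP (fun s => if s.card = 1 then 1 else 0) (by simp),
    sum_single] at h2
  have h3 := sum_card_finset k
  omega

/-- For `t ≥ 7`, `2 ≤ k ≤ ⌊t/2⌋ - 1` and `N = (2^k - 1)·2^(t+1-k)`, there is a connected
graph on `N` vertices with exactly `(k+1)·N - (2t - k + 4)·2^(k-1) + t - k + 2` edges in
which every vertex has broadcast time at most `t + 1`. -/
theorem exists_broadcast_graph_of_N (t k N : ℕ) (ht : 7 ≤ t) (hk : 2 ≤ k)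
    (hk' : k ≤ t / 2 - 1) (hN : N = (2 ^ k - 1) * 2 ^ (t + 1 - k)) :
    ∃ G : SimpleGraph (Fin N), G.Connected ∧
      (G.edgeSet.ncard : ℤ) = (k + 1) * N - (2 * t - k + 4) * 2 ^ (k - 1) + t - k + 2 ∧
      ∀ u, broadcastTime G u ≤ t + 1 := by
  obtain ⟨m, hm⟩ : ∃ m, m = t + 1 - k := ⟨_, rfl⟩
  obtain ⟨a, ha⟩ : ∃ a, a = 2 ^ (k - 1) := ⟨_, rfl⟩
  obtain ⟨c, hc⟩ : ∃ c, c = 2 ^ m := ⟨_, rfl⟩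
  have hkm : t = k + m - 1 := by omega
  have hm3 : k + 3 ≤ m := by omega
  have h2k : 2 ^ k = 2 * a := by
    rw [ha, ← pow_succ']
    congr 1
    omega
  have hak : 2 ≤ a := by
    rw [ha]
    exact Nat.le_self_pow (by omega) 2
  have hcm : m + 1 ≤ c := hc ▸ Nat.lt_two_pow_self
  have hcard : Fintype.card (BV k m) = N := by
    rw [Fintype.card_prod, card_BP, Fintype.card_finset, Fintype.card_fin, hN, hm]
  have hs := bsum (k := k) (m := m)
  rw [← hm, ← hc, h2k] at hN
  rw [← hc, h2k] at hs
  have ea : ((2 * a - 1 : ℕ) : ℤ) = 2 * a - 1 := by push_cast [Nat.cast_sub (show 1 ≤ 2 * a by omega)]; ring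
  have ec : ((c - 1 : ℕ) : ℤ) = c - 1 := by push_cast [Nat.cast_sub (show 1 ≤ c by omega)]; ring
  have hNz : (N : ℤ) = (2 * a - 1) * c := by rw [hN, Nat.cast_mul, ea]
  have htz : (t : ℤ) = k + m - 1 := by omega
  have hsz : 2 * ((bgraph k m).edgeSet.ncard : ℤ) + 2 * ((2 * a - 1) * m) + 2 * k ≤
      k * (2 * a) + 2 * ((2 * a - 1) * ((c - 1) * (k + 1))) := by
    have := (Nat.cast_le (α := ℤ)).2 hs
    push_cast [ea, ec] at this
    exact this
  have haz : ((2 : ℤ) ^ (k - 1)) = a := by rw [ha]; push_cast; rfl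
  rw [haz]
  obtain ⟨E, hE⟩ : ∃ E : ℤ, E = (k + 1) * N - (2 * t - k + 4) * a + t - k + 2 := ⟨_, rfl⟩
  have hEle : ((bgraph k m).edgeSet.ncard : ℤ) ≤ E := by
    rw [hE, hNz, htz]
    nlinarith
  have hN3 : 2 * k + 3 ≤ N := by
    rw [hN]
    calc 2 * k + 3 ≤ 3 * c := by omega
      _ ≤ _ := Nat.mul_le_mul_right _ (by omega)
  have hEN : E ≤ (k + 1) * N := by
    rw [hE, htz]
    have h1 : (2 : ℤ) ≤ a := by exact_mod_cast hak
    have h2 : (k : ℤ) + 3 ≤ m := by exact_mod_cast hm3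
    nlinarith
  have hch : (k + 1) * N ≤ N.choose 2 := by
    rw [Nat.choose_two_right, Nat.le_div_iff_mul_le (by norm_num)]
    calc (k + 1) * N * 2 = N * (2 * k + 2) := by ring
      _ ≤ _ := Nat.mul_le_mul_left _ (by omega)
  have hE0 : 0 ≤ E := le_trans (by positivity) hEle
  obtain ⟨M, hM⟩ := Int.eq_ofNat_of_zero_le hE0
  obtain ⟨G, h1, h2, h3⟩ := padding N M (k + m) hcard (by omega) (bgraph k m)
    (by rw [hM] at hEle; exact_mod_cast hEle)
    (le_trans (by rw [hM] at hEN; exact_mod_cast hEN) hch) bcert_all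
  refine ⟨G, h1, ?_, fun u => (h3 u).trans (by omega)⟩
  rw [h2, ← hE, hM]
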